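/- Let n ≥ 1 and define γ : [−π, π] → ℂ by γ(α) = e^{iα} (1 − (1 − e^{−iα})/n)^n. Then the image Πd(SU(n)) = {Πd(U) : U ∈ SU(n)} is a compact subset of ℂ whose topological frontier (boundary in ℂ) equals the image γ([−π, π]) of the curve γ. -/

import Mathlib

open Matrix Complex Real

/-- Sums of `n` unit complex numbers with product one. -/
def TT (n : ℕ) : Set ℂ :=
  {w | ∃ u : Fin n → ℂ, (∀ k, ‖u k‖ = 1) ∧ ∏ k, u k = 1 ∧ ∑ k, u k = w}

lemma sum_upd {n : ℕ} (u : Fin n → ℂ) (i : Fin n) (p : ℂ) :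
    ∑ k, Function.update u i p k = ∑ k, u k - u i + p := by
  rw [Finset.sum_update_of_mem (Finset.mem_univ i), ← Finset.erase_eq,
    ← Finset.add_sum_erase _ u (Finset.mem_univ i)]
  ring

lemma prod_upd {n : ℕ} (u : Fin n → ℂ) (i : Fin n) (p : ℂ) (h : u i ≠ 0) :
    ∏ k, Function.update u i p k = (∏ k, u k) * p / u i := by
  rw [Finset.prod_update_of_mem (Finset.mem_univ i), ← Finset.erase_eq,
    ← Finset.mul_prod_erase _ u (Finset.mem_univ i)]
  field_simp

lemma norm_upd {n : ℕ} (u : Fin n → ℂ) (i : Fin n) (p : ℂ) (h : ∀ k, ‖u k‖ = 1) (hp : ‖p‖ = 1) :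
    ∀ k, ‖Function.update u i p k‖ = 1 := by
  intro k
  by_cases hk : k = i
  · subst hk; simpa using hp
  · simpa [Function.update_of_ne hk] using h k

lemma ne_zero_of_norm_one {z : ℂ} (h : ‖z‖ = 1) : z ≠ 0 := by
  rintro rfl; simp at h

/-- replace two entries keeping the product -/
lemma upd2 {n : ℕ} (u : Fin n → ℂ) (hu : ∀ k, ‖u k‖ = 1) (i j : Fin n) (hij : i ≠ j) (p q : ℂ)
    (hp : ‖p‖ = 1) (hq : ‖q‖ = 1) (hpq : p * q = u i * u j) :
    ∃ v : Fin n → ℂ, (∀ k, ‖v k‖ = 1) ∧ ∏ k, v k = ∏ k, u k ∧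
      ∑ k, v k = ∑ k, u k - u i - u j + p + q ∧ v i = p ∧ v j = q ∧
      ∀ k, k ≠ i → k ≠ j → v k = u k := by
  have hi := ne_zero_of_norm_one (hu i)
  have hj := ne_zero_of_norm_one (hu j)
  refine ⟨Function.update (Function.update u i p) j q, ?_, ?_, ?_, ?_, ?_, ?_⟩
  · exact norm_upd _ _ _ (norm_upd _ _ _ hu hp) hq
  · rw [prod_upd, prod_upd _ _ _ hi, Function.update_of_ne hij.symm]
    · field_simp
      linear_combination (∏ k, u k) * hpq
    · rwa [Function.update_of_ne hij.symm]
  · rw [sum_upd, sum_upd, Function.update_of_ne hij.symm]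
    ring
  · rw [Function.update_of_ne hij]; simp
  · simp
  · intro k h1 h2
    rw [Function.update_of_ne h2, Function.update_of_ne h1]

lemma lin_indep_circle {a b c : ℂ} (ha : ‖a‖ = 1) (hb : ‖b‖ = 1) (hc : ‖c‖ = 1)
    (hab : a ≠ b) (hac : a ≠ c) (hbc : b ≠ c) (s t : ℝ)
    (h : (s : ℂ) * (a - c) + t * (b - c) = 0) : s = 0 ∧ t = 0 := by
  have key : ∀ a : ℂ, ‖a‖ = 1 → a.re ^ 2 + a.im ^ 2 = 1 := by
    intro a ha
    have := Complex.sq_norm a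
    rw [ha, Complex.normSq_apply] at this
    nlinarith
  have h1 := key a ha
  have h2 := key b hb
  have h3 := key c hc
  have hre := congrArg Complex.re h
  have him := congrArg Complex.im h
  simp at hre him
  obtain ⟨a1, a2⟩ := a
  obtain ⟨b1, b2⟩ := b
  obtain ⟨c1, c2⟩ := c
  simp only at *
  have nab : (a1 - b1) ^ 2 + (a2 - b2) ^ 2 ≠ 0 := by
    intro h0
    apply hab
    have x1 : a1 - b1 = 0 := by nlinarith [sq_nonneg (a1 - b1), sq_nonneg (a2 - b2)]
    have x2 : a2 - b2 = 0 := by nlinarith [sq_nonneg (a1 - b1), sq_nonneg (a2 - b2)]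
    congr <;> linarith
  have nac : (a1 - c1) ^ 2 + (a2 - c2) ^ 2 ≠ 0 := by
    intro h0
    apply hac
    have x1 : a1 - c1 = 0 := by nlinarith [sq_nonneg (a1 - c1), sq_nonneg (a2 - c2)]
    have x2 : a2 - c2 = 0 := by nlinarith [sq_nonneg (a1 - c1), sq_nonneg (a2 - c2)]
    congr <;> linarith
  have nbc : (b1 - c1) ^ 2 + (b2 - c2) ^ 2 ≠ 0 := by
    intro h0
    apply hbc
    have x1 : b1 - c1 = 0 := by nlinarith [sq_nonneg (b1 - c1), sq_nonneg (b2 - c2)]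
    have x2 : b2 - c2 = 0 := by nlinarith [sq_nonneg (b1 - c1), sq_nonneg (b2 - c2)]
    congr <;> linarith
  have hP : 2 * (c1 * (a1 - c1) + c2 * (a2 - c2)) + ((a1 - c1) ^ 2 + (a2 - c2) ^ 2) = 0 := by
    linear_combination h1 - h3
  have hQ : 2 * (c1 * (b1 - c1) + c2 * (b2 - c2)) + ((b1 - c1) ^ 2 + (b2 - c2) ^ 2) = 0 := by
    linear_combination h2 - h3
  -- s|p|^2 + t|q|^2 = 0
  have e1 : s * ((a1 - c1) ^ 2 + (a2 - c2) ^ 2) + t * ((b1 - c1) ^ 2 + (b2 - c2) ^ 2) = 0 := by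
    linear_combination s * hP + t * hQ - 2 * c1 * hre - 2 * c2 * him
  -- s^2|p|^2 = t^2|q|^2
  have e2 : s ^ 2 * ((a1 - c1) ^ 2 + (a2 - c2) ^ 2) = t ^ 2 * ((b1 - c1) ^ 2 + (b2 - c2) ^ 2) := by
    linear_combination (s * (a1 - c1) - t * (b1 - c1)) * hre + (s * (a2 - c2) - t * (b2 - c2)) * him
  have e3 : t * (s + t) = 0 := by
    have : t * (s + t) * ((b1 - c1) ^ 2 + (b2 - c2) ^ 2) = 0 := by
      linear_combination s * e1 - e2
    exact (mul_eq_zero.1 this).resolve_right nbc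
  rcases mul_eq_zero.1 e3 with h0 | h0
  · subst h0
    simp at e1
    refine ⟨e1.resolve_right nac, rfl⟩
  · have ht : t = -s := by linarith
    subst ht
    have : s ^ 2 * ((a1 - b1) ^ 2 + (a2 - b2) ^ 2) = 0 := by
      linear_combination s * (a1 - b1) * hre + s * (a2 - b2) * him
    have := (mul_eq_zero.1 this).resolve_right nab
    have : s = 0 := by simpa using this
    simp [this]

lemma interior_three {n : ℕ} (u : Fin n → ℂ) (hu : ∀ k, ‖u k‖ = 1) (hprod : ∏ k, u k = 1)
    (i j k : Fin n) (hij : u i ≠ u j) (hik : u i ≠ u k) (hjk : u j ≠ u k) :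
    ∑ m, u m ∈ interior (TT n) := by
  have nij : i ≠ j := fun h => hij (by rw [h])
  have nik : i ≠ k := fun h => hik (by rw [h])
  have njk : j ≠ k := fun h => hjk (by rw [h])
  let F : ℝ × ℝ → ℂ := fun x => (∑ m, u m - u i - u j - u k) + u i * cexp (I * x.1)
    + u j * cexp (I * x.2) + u k * cexp (-(I * (x.1 + x.2)))
  have hF : ∀ x, F x ∈ TT n := by
    intro x
    have n1 : ‖cexp (I * x.1)‖ = 1 := by rw [mul_comm]; exact Complex.norm_exp_ofReal_mul_I _
    have n2 : ‖cexp (I * x.2)‖ = 1 := by rw [mul_comm]; exact Complex.norm_exp_ofReal_mul_I _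
    have n3 : ‖cexp (-(I * (x.1 + x.2)))‖ = 1 := by
      have := Complex.norm_exp_ofReal_mul_I (-(x.1 + x.2))
      rw [← this]; congr 2; push_cast; ring
    have e1 : cexp (I * x.1) * cexp (-(I * x.1)) = 1 := by rw [← Complex.exp_add]; simp
    have e3 : cexp (I * x.1) * cexp (I * x.2) * cexp (-(I * (x.1 + x.2))) = 1 := by
      rw [← Complex.exp_add, ← Complex.exp_add, ← Complex.exp_zero]; congr 1; ring
    refine ⟨Function.update (Function.update (Function.update u i (u i * cexp (I * x.1))) j
      (u j * cexp (I * x.2))) k (u k * cexp (-(I * (x.1 + x.2)))), ?_, ?_, ?_⟩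
    · refine norm_upd _ _ _ (norm_upd _ _ _ (norm_upd _ _ _ hu ?_) ?_) ?_ <;>
        rw [norm_mul, hu, one_mul] <;> assumption
    · have hi := ne_zero_of_norm_one (hu i)
      have hj := ne_zero_of_norm_one (hu j)
      have hk := ne_zero_of_norm_one (hu k)
      have q1 : Function.update u i (u i * cexp (I * x.1)) j = u j := Function.update_of_ne nij.symm _ _
      have q2 : Function.update (Function.update u i (u i * cexp (I * x.1))) j
          (u j * cexp (I * x.2)) k = u k := by
        rw [Function.update_of_ne njk.symm, Function.update_of_ne nik.symm]
      rw [prod_upd _ _ _ (by rwa [q2]), q2, prod_upd _ _ _ (by rwa [q1]), q1, prod_upd _ _ _ hi, hprod]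
      field_simp
      linear_combination e3
    · rw [sum_upd, sum_upd, sum_upd, Function.update_of_ne njk.symm,
        Function.update_of_ne nik.symm, Function.update_of_ne nij.symm]
      simp only [F]
      ring
  let c1 : ℝ × ℝ →L[ℝ] ℂ := Complex.ofRealCLM.comp (ContinuousLinearMap.fst ℝ ℝ ℝ)
  let c2 : ℝ × ℝ →L[ℝ] ℂ := Complex.ofRealCLM.comp (ContinuousLinearMap.snd ℝ ℝ ℝ)
  have hc1 : HasStrictFDerivAt (fun x : ℝ × ℝ => I * (x.1 : ℂ)) (I • c1) 0 :=
    (c1.hasStrictFDerivAt (x := 0)).const_mul I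
  have hc2 : HasStrictFDerivAt (fun x : ℝ × ℝ => I * (x.2 : ℂ)) (I • c2) 0 :=
    (c2.hasStrictFDerivAt (x := 0)).const_mul I
  have hc3 : HasStrictFDerivAt (fun x : ℝ × ℝ => -(I * ((x.1 : ℂ) + x.2))) (-(I • (c1 + c2))) 0 :=
    (((c1 + c2).hasStrictFDerivAt (x := 0)).const_mul I).neg
  have hd := (((hc1.cexp.const_mul (u i)).const_add (∑ m, u m - u i - u j - u k)).add
    (hc2.cexp.const_mul (u j))).add (hc3.cexp.const_mul (u k))
  have hd' : HasStrictFDerivAt F _ 0 := hd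
  have hs := hd'.map_nhds_eq_of_surj (by
    rw [LinearMap.range_eq_top]
    refine (LinearMap.injective_iff_surjective_of_finrank_eq_finrank (by simp)).1 ?_
    rw [← LinearMap.ker_eq_bot, LinearMap.ker_eq_bot']
    rintro ⟨s, t⟩ hst
    simp [c1, c2] at hst
    have := lin_indep_circle (hu i) (hu j) (hu k) hij hik hjk s t (by
      have h2 : I * ((s : ℂ) * (u i - u k) + t * (u j - u k)) = 0 := by
        linear_combination hst
      exact (mul_eq_zero.1 h2).resolve_left I_ne_zero)
    simp [this.1, this.2])
  have h0 : F 0 = ∑ m, u m := by simp [F]; ring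
  rw [h0] at hs
  rw [mem_interior_iff_mem_nhds, ← hs]
  exact Filter.mem_map.2 (Filter.univ_mem' hF)

lemma interior_four {n : ℕ} (u : Fin n → ℂ) (hu : ∀ k, ‖u k‖ = 1) (hprod : ∏ k, u k = 1)
    (i j k l : Fin n) (hij : u i ≠ u j) (hik : k ≠ i) (hjl : l ≠ j) (hk : u k = u i)
    (hl : u l = u j) :
    ∑ m, u m ∈ interior (TT n) := by
  have nij : i ≠ j := fun h => hij (by rw [h])
  have nil : l ≠ i := fun h => hij (by rw [← h, hl])
  have nkj : k ≠ j := fun h => hij (by rw [← h, hk])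
  have nkl : k ≠ l := fun h => hij (by rw [← hk, ← hl, h])
  obtain ⟨g, hg⟩ := IsAlgClosed.exists_pow_nat_eq (u i * u j) (n := 2) (by norm_num)
  have hgn : ‖g‖ = 1 := by
    have := congrArg norm hg
    rw [norm_pow, norm_mul, hu, hu, mul_one] at this
    exact (pow_eq_one_iff_of_nonneg (norm_nonneg _) (by norm_num)).1 this
  have hg0 := ne_zero_of_norm_one hgn
  -- a = g ζ, b = g conj ζ
  obtain ⟨ζ, hζ⟩ : ∃ ζ, ζ = u i / g := ⟨_, rfl⟩
  have hζn : ‖ζ‖ = 1 := by rw [hζ, norm_div, hu, hgn, div_one]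
  have hζ0 := ne_zero_of_norm_one hζn
  have hui : u i = g * ζ := by rw [hζ]; field_simp
  have hconj : (starRingEnd ℂ) ζ * ζ = 1 := by
    rw [mul_comm, Complex.mul_conj, Complex.normSq_eq_norm_sq, hζn]; simp
  have huj : u j = g * (starRingEnd ℂ) ζ := by
    have h1 : ζ * g * u j = g * g := by rw [mul_comm ζ g, ← hui, ← hg]; ring
    have h2 : ζ * u j = g := by
      apply mul_left_cancel₀ hg0; linear_combination h1
    linear_combination (-u j) * hconj + (starRingEnd ℂ) ζ * h2
  have hre : ζ.re ^ 2 + ζ.im ^ 2 = 1 := by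
    have := Complex.sq_norm ζ
    rw [hζn, Complex.normSq_apply] at this
    nlinarith
  have him : ζ.im ≠ 0 := by
    intro h
    apply hij
    rw [hui, huj, Complex.conj_eq_iff_im.2 h]
  have hlt : ζ.re ^ 2 < 1 := by
    have : 0 < ζ.im ^ 2 := by positivity
    linarith
  have habs : |ζ.re| < 1 := by rwa [← sq_lt_one_iff_abs_lt_one]
  obtain ⟨ε, hε⟩ : ∃ ε, ε = (1 - |ζ.re|) / 2 := ⟨_, rfl⟩
  have hε0 : 0 < ε := by rw [hε]; linarith
  have hc1 := le_abs_self ζ.re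
  have hc2 := neg_le_abs ζ.re
  have hexp : ∀ A : ℝ, ‖cexp (A * I)‖ = 1 := Complex.norm_exp_ofReal_mul_I
  have hexp2 : ∀ A : ℝ, ‖cexp (-(A * I))‖ = 1 := by
    intro A; have := hexp (-A); simpa using this
  have hsum : ∀ A : ℝ, cexp (A * I) + cexp (-(A * I)) = 2 * Real.cos A := by
    intro A; rw [Complex.ofReal_cos, Complex.cos]; simp; ring
  have hmul : ∀ A : ℝ, cexp (A * I) * cexp (-(A * I)) = 1 := by
    intro A; rw [← Complex.exp_add]; simp
  let A := Real.arccos (ζ.re + ε)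
  let B := Real.arccos (ζ.re - ε)
  have hA : Real.cos A = ζ.re + ε := Real.cos_arccos (by linarith) (by linarith)
  have hB : Real.cos B = ζ.re - ε := Real.cos_arccos (by linarith) (by linarith)
  have hreA : ∀ A : ℝ, (cexp (A * I)).re = Real.cos A := Complex.exp_ofReal_mul_I_re
  have hreA' : ∀ A : ℝ, (cexp (-(A * I))).re = Real.cos A := by
    intro A
    have := hreA (-A)
    simpa using this
  have himA : ∀ A : ℝ, (cexp (A * I)).im = Real.sin A := Complex.exp_ofReal_mul_I_im
  have himA' : ∀ A : ℝ, (cexp (-(A * I))).im = -Real.sin A := by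
    intro A
    have := himA (-A)
    simpa using this
  have hsA : Real.sin A ≠ 0 := by
    intro h
    have := Real.sin_sq_add_cos_sq A
    rw [h, hA] at this
    nlinarith
  obtain ⟨v, v1, v2, v3, v4, v5, v6⟩ := upd2 u hu i j nij (g * cexp (A * I)) (g * cexp (-(A * I)))
    (by rw [norm_mul, hgn, hexp, one_mul]) (by rw [norm_mul, hgn, hexp2, one_mul])
    (by rw [← hg]; linear_combination g ^ 2 * hmul A)
  obtain ⟨x, x1, x2, x3, x4, x5, x6⟩ := upd2 v v1 k l nkl (g * cexp (B * I)) (g * cexp (-(B * I)))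
    (by rw [norm_mul, hgn, hexp, one_mul]) (by rw [norm_mul, hgn, hexp2, one_mul])
    (by rw [v6 k hik nkj, v6 l nil hjl, hk, hl, ← hg]; linear_combination g ^ 2 * hmul B)
  have hS : ∑ m, u m = ∑ m, x m := by
    rw [x3, v3, v6 k hik nkj, v6 l nil hjl, hk, hl]
    have r := Complex.add_conj ζ
    have s1 := hsum A
    have s2 := hsum B
    rw [hA] at s1
    rw [hB] at s2
    rw [hui, huj]
    push_cast at *
    linear_combination 2 * g * r - g * s1 - g * s2
  rw [hS]
  have xi := x6 i hik.symm nil.symm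
  have xj := x6 j nkj.symm hjl.symm
  refine interior_three x x1 (by rw [x2, v2, hprod]) i j k ?_ ?_ ?_
  · rw [xi, xj, v4, v5]
    intro h
    have h := congrArg Complex.im (mul_left_cancel₀ hg0 h)
    rw [himA, himA'] at h
    apply hsA; linarith
  · rw [xi, x4, v4]
    intro h
    have h := congrArg Complex.re (mul_left_cancel₀ hg0 h)
    rw [hreA, hreA, hA, hB] at h
    linarith
  · rw [xj, x4, v5]
    intro h
    have h := congrArg Complex.re (mul_left_cancel₀ hg0 h)
    rw [hreA', hreA, hA, hB] at h
    linarith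

lemma not_interior_form {n : ℕ} (hn : 1 ≤ n) (u : Fin n → ℂ) (hu : ∀ k, ‖u k‖ = 1)
    (hprod : ∏ k, u k = 1) (h : ∑ m, u m ∉ interior (TT n)) :
    ∃ i : Fin n, ∃ a : ℂ, ∀ k, k ≠ i → u k = a := by
  by_contra! hc
  have : ∃ i j, u i ≠ u j := by
    obtain ⟨k, _, hk⟩ := hc ⟨0, hn⟩ (u ⟨0, hn⟩)
    exact ⟨_, _, hk⟩
  obtain ⟨i, j, hij⟩ := this
  by_cases h3 : ∃ k, u k ≠ u i ∧ u k ≠ u j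
  · obtain ⟨k, h1, h2⟩ := h3
    exact h (interior_three u hu hprod i j k hij h1.symm h2.symm)
  · push Not at h3
    obtain ⟨k, hk, hk'⟩ := hc i (u j)
    obtain ⟨l, hl, hl'⟩ := hc j (u i)
    have e1 : u k = u i := by by_contra h0; exact hk' (h3 k h0)
    exact h (interior_four u hu hprod i j k l hij hk hl e1 (h3 l hl'))

/-- the boundary curve -/
noncomputable def gam (n : ℕ) : ℝ → ℂ := fun α : ℝ => Complex.exp (Complex.I * α) *
        (1 - (1 - Complex.exp (-(Complex.I * α))) / n) ^ n

noncomputable def gg (n : ℕ) : ℝ → ℝ := fun α =>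
  α - n * Real.arctan (Real.sin α / (n - 1 + Real.cos α))

lemma gam_polar (n : ℕ) (hn : 3 ≤ n) (α : ℝ) :
    ∃ ρ : ℝ, 0 < ρ ∧ gam n α = ρ * cexp (I * gg n α) := by
  have hn' : (3 : ℝ) ≤ n := by exact_mod_cast hn
  have hc : 0 < (n : ℝ) - 1 + Real.cos α := by linarith [Real.neg_one_le_cos α]
  obtain ⟨c, hcd⟩ : ∃ c, c = (n : ℝ) - 1 + Real.cos α := ⟨_, rfl⟩
  rw [← hcd] at hc
  obtain ⟨τ, hτ⟩ : ∃ τ, τ = Real.arctan (Real.sin α / c) := ⟨_, rfl⟩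
  have hct : 0 < Real.cos τ := by rw [hτ]; exact Real.cos_arctan_pos _
  have htan : Real.sin τ * c = Real.sin α * Real.cos τ := by
    have h1 : Real.tan τ = Real.sin α / c := by rw [hτ, Real.tan_arctan]
    rw [Real.tan_eq_sin_div_cos] at h1
    field_simp at h1
    linarith
  have h1 : (1 - (1 - Complex.exp (-(Complex.I * α))) / n : ℂ)
      = (c / Real.cos τ / n : ℝ) * cexp (-(I * τ)) := by
    have e1 : cexp (-(I * α)) = Real.cos α - Real.sin α * I := by
      have := Complex.exp_mul_I (-α : ℂ)
      rw [show -(I * (α : ℂ)) = -α * I by ring, this]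
      simp; ring
    have e2 : cexp (-(I * τ)) = Real.cos τ - Real.sin τ * I := by
      have := Complex.exp_mul_I (-τ : ℂ)
      rw [show -(I * (τ : ℂ)) = -τ * I by ring, this]
      simp; ring
    rw [e1, e2]
    have hn0 : (n : ℂ) ≠ 0 := by norm_cast; omega
    have hct' : (Real.cos τ : ℂ) ≠ 0 := by exact_mod_cast hct.ne'
    have hcd' : (c : ℂ) = (n : ℂ) - 1 + Real.cos α := by rw [hcd]; push_cast; ring
    have htan' : (Real.sin τ : ℂ) * c = Real.sin α * Real.cos τ := by exact_mod_cast htan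
    rw [Complex.ofReal_div, Complex.ofReal_div, Complex.ofReal_natCast]
    field_simp
    linear_combination (-(Real.cos τ) : ℂ) * hcd' + I * htan'
  refine ⟨(c / Real.cos τ / n) ^ n, by positivity, ?_⟩
  simp only [gam]
  rw [h1, mul_pow, ← Complex.exp_nat_mul]
  simp only [gg]
  rw [← hcd, ← hτ]
  push_cast
  rw [mul_left_comm, ← Complex.exp_add]
  congr 2
  ring

lemma gg_strictMono (n : ℕ) (hn : 3 ≤ n) : StrictMonoOn (gg n) (Set.Icc (-π) π) := by
  have hn' : (3 : ℝ) ≤ n := by exact_mod_cast hn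
  have hd : ∀ α : ℝ, HasDerivAt (gg n) (1 - n * ((1 / (1 + (Real.sin α / (n - 1 + Real.cos α)) ^ 2)) *
      ((Real.cos α * (n - 1 + Real.cos α) - Real.sin α * (-Real.sin α)) / (n - 1 + Real.cos α) ^ 2))) α := by
    intro α
    have hc : (n : ℝ) - 1 + Real.cos α ≠ 0 := by linarith [Real.neg_one_le_cos α]
    have h1 := ((Real.hasDerivAt_sin α).div ((Real.hasDerivAt_cos α).const_add ((n : ℝ) - 1)) hc).arctan
    exact (hasDerivAt_id α).sub (h1.const_mul (n : ℝ))
  have hpos : ∀ α : ℝ, Real.cos α < 1 → 0 < deriv (gg n) α := by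
    intro α hα
    rw [(hd α).deriv]
    have hc : 0 < (n : ℝ) - 1 + Real.cos α := by linarith [Real.neg_one_le_cos α]
    have hsc := Real.sin_sq_add_cos_sq α
    set C := Real.cos α
    set S := Real.sin α
    have e : (1 - n * ((1 / (1 + (S / (n - 1 + C)) ^ 2)) *
      ((C * (n - 1 + C) - S * (-S)) / (n - 1 + C) ^ 2)))
      = ((n - 1) * (n - 2) * (1 - C)) / ((n - 1 + C) ^ 2 + S ^ 2) := by
      have : (n - 1 + C) ^ 2 + S ^ 2 ≠ 0 := by positivity
      have h3 : (1 + (S / (n - 1 + C)) ^ 2) = ((n - 1 + C) ^ 2 + S ^ 2) / (n - 1 + C) ^ 2 := by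
        field_simp
      rw [h3]
      field_simp
      linear_combination (1 - (n : ℝ)) * hsc
    rw [e]
    have : 0 < (n : ℝ) - 1 := by linarith
    have : 0 < (n : ℝ) - 2 := by linarith
    have : 0 < 1 - C := by linarith
    positivity
  have hcont : Continuous (gg n) := continuous_iff_continuousAt.2 fun α => (hd α).continuousAt
  have hcos : ∀ α, -π ≤ α → α ≤ π → α ≠ 0 → Real.cos α < 1 := by
    intro α h1 h2 h0
    refine lt_of_le_of_ne (Real.cos_le_one α) fun h => h0 ?_
    exact (Real.cos_eq_one_iff_of_lt_of_lt (by linarith [Real.pi_pos]) (by linarith [Real.pi_pos])).1 h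
  have hL : StrictMonoOn (gg n) (Set.Icc (-π) 0) := by
    apply strictMonoOn_of_deriv_pos (convex_Icc _ _) hcont.continuousOn
    intro x hx
    rw [interior_Icc] at hx
    exact hpos x (hcos x hx.1.le (by linarith [hx.2, Real.pi_pos]) hx.2.ne)
  have hR : StrictMonoOn (gg n) (Set.Icc 0 π) := by
    apply strictMonoOn_of_deriv_pos (convex_Icc _ _) hcont.continuousOn
    intro x hx
    rw [interior_Icc] at hx
    exact hpos x (hcos x (by linarith [hx.1, Real.pi_pos]) hx.2.le hx.1.ne')
  have := hL.union hR (isGreatest_Icc (by linarith [Real.pi_pos])) (isLeast_Icc Real.pi_pos.le)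
  rwa [Set.Icc_union_Icc_eq_Icc (by linarith [Real.pi_pos]) Real.pi_pos.le] at this

lemma gg_pi (n : ℕ) : gg n π = π := by simp [gg]
lemma gg_neg_pi (n : ℕ) : gg n (-π) = -π := by simp [gg]

lemma gam_pi (n : ℕ) : gam n (-π) = gam n π := by
  have h1 : cexp (I * π) = -1 := by rw [mul_comm]; exact Complex.exp_pi_mul_I
  have h2 : cexp (-(I * π)) = -1 := by rw [Complex.exp_neg, h1]; norm_num
  simp [gam, h1, h2]

lemma gam_ray (n : ℕ) (hn : 3 ≤ n) (x y : ℂ) (hx : x ∈ gam n '' Set.Icc (-π) π)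
    (hy : y ∈ gam n '' Set.Icc (-π) π) (r : ℝ) (hr : 0 < r) (h : y = r * x) : y = x := by
  obtain ⟨α, hα, rfl⟩ := hx
  obtain ⟨β, hβ, rfl⟩ := hy
  obtain ⟨ρ, h1, e1⟩ := gam_polar n hn α
  obtain ⟨σ, h2, e2⟩ := gam_polar n hn β
  have hexp : ∀ A : ℝ, ‖cexp (I * A)‖ = 1 := fun A => by
    rw [mul_comm]; exact Complex.norm_exp_ofReal_mul_I _
  have hn1 := congrArg norm h
  rw [e1, e2] at hn1 h
  simp only [norm_mul, hexp, Complex.norm_real, Real.norm_eq_abs, abs_of_pos h1, abs_of_pos h2,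
    abs_of_pos hr, mul_one] at hn1
  have h3 : cexp (I * gg n β) = cexp (I * gg n α) := by
    have : (σ : ℂ) ≠ 0 := by exact_mod_cast h2.ne'
    apply mul_left_cancel₀ this
    rw [h, ← mul_assoc, hn1]; push_cast; ring
  obtain ⟨m, hm⟩ := Complex.exp_eq_exp_iff_exists_int.1 h3
  have hm' : gg n β = gg n α + m * (2 * π) := by
    have : (I : ℂ) * (gg n β) = I * ((gg n α + m * (2 * π) : ℝ) : ℂ) := by
      rw [hm]; push_cast; ring
    exact_mod_cast mul_left_cancel₀ I_ne_zero this
  have hmono := gg_strictMono n hn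
  have hpi := Real.pi_pos
  have lo : (-π) ∈ Set.Icc (-π) π := ⟨le_rfl, by linarith⟩
  have hi : π ∈ Set.Icc (-π) π := ⟨by linarith, le_rfl⟩
  have b1 := hmono.monotoneOn lo hα hα.1
  have b2 := hmono.monotoneOn hα hi hα.2
  have b3 := hmono.monotoneOn lo hβ hβ.1
  have b4 := hmono.monotoneOn hβ hi hβ.2
  rw [gg_pi] at b2 b4
  rw [gg_neg_pi] at b1 b3
  have m1 : (m : ℝ) ≤ 1 := by nlinarith
  have m2 : (-1 : ℝ) ≤ m := by nlinarith
  have m1' : m ≤ 1 := by exact_mod_cast m1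
  have m2' : -1 ≤ m := by exact_mod_cast m2
  have : m = -1 ∨ m = 0 ∨ m = 1 := by omega
  rcases this with rfl | rfl | rfl
  · push_cast at hm'
    have q1 : α = π := hmono.injOn hα hi (by rw [gg_pi]; linarith)
    have q2 : β = -π := hmono.injOn hβ lo (by rw [gg_neg_pi]; linarith)
    rw [q1, q2, gam_pi]
  · have : β = α := hmono.injOn hβ hα (by simpa using hm')
    rw [this]
  · push_cast at hm'
    have q1 : α = -π := hmono.injOn hα lo (by rw [gg_neg_pi]; linarith)
    have q2 : β = π := hmono.injOn hβ hi (by rw [gg_pi]; linarith)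
    rw [q1, q2, gam_pi]

lemma gam_ne_zero (n : ℕ) (hn : 3 ≤ n) (α : ℝ) : gam n α ≠ 0 := by
  obtain ⟨ρ, h1, e1⟩ := gam_polar n hn α
  rw [e1]
  exact mul_ne_zero (by exact_mod_cast h1.ne') (Complex.exp_ne_zero _)

lemma frontier_of_path {Q : Set ℂ} (hQ : IsClosed Q) (z : ℂ) (a b : ℝ)
    (h : ∃ t ∈ Set.Icc a b, (t : ℂ) * z ∈ Q) (h' : ∃ t ∈ Set.Icc a b, (t : ℂ) * z ∉ Q) :
    ∃ t ∈ Set.Icc a b, (t : ℂ) * z ∈ frontier Q := by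
  by_contra! hc
  have hpre : IsPreconnected ((fun t : ℝ => (t : ℂ) * z) '' Set.Icc a b) :=
    isPreconnected_Icc.image _ (by fun_prop)
  obtain ⟨t, ht, htQ⟩ := h
  obtain ⟨s, hs, hsQ⟩ := h'
  have hi : ∀ t ∈ Set.Icc a b, (t : ℂ) * z ∈ Q → (t : ℂ) * z ∈ interior Q := by
    intro t ht hq
    by_contra h0
    exact hc t ht (by rw [hQ.frontier_eq]; exact ⟨hq, h0⟩)
  obtain ⟨x, -, hx1, hx2⟩ := hpre (interior Q) Qᶜ isOpen_interior hQ.isOpen_compl (by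
    rintro _ ⟨t, ht, rfl⟩
    by_cases hq : (t : ℂ) * z ∈ Q
    · exact Or.inl (hi t ht hq)
    · exact Or.inr hq) ⟨_, ⟨t, ht, rfl⟩, hi t ht htQ⟩ ⟨_, ⟨s, hs, rfl⟩, hsQ⟩
  exact hx2 (interior_subset hx1)

lemma star_abstract {Q Γ : Set ℂ} (hQ : IsCompact Q) (h0 : (0 : ℂ) ∈ Q) (hΓ0 : (0 : ℂ) ∉ Γ)
    (hf : frontier Q ⊆ Γ) (hray : ∀ x ∈ Γ, ∀ y ∈ Γ, ∀ r : ℝ, 0 < r → y = r * x → y = x)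
    (z : ℂ) (hz : z ∈ Q) (r : ℝ) (hr0 : 0 ≤ r) (hr1 : r ≤ 1) : (r : ℂ) * z ∈ Q := by
  by_contra hc
  obtain ⟨s, hs, hsF⟩ := frontier_of_path hQ.isClosed z 0 r ⟨0, ⟨le_rfl, hr0⟩, by simpa using h0⟩
    ⟨r, ⟨hr0, le_rfl⟩, hc⟩
  obtain ⟨t, ht, htF⟩ := frontier_of_path hQ.isClosed z r 1 ⟨1, ⟨hr1, le_rfl⟩, by simpa using hz⟩
    ⟨r, ⟨le_rfl, hr1⟩, hc⟩
  have hs0 : s ≠ 0 := by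
    rintro rfl
    exact hΓ0 (by simpa using hf hsF)
  have hz0 : z ≠ 0 := by
    rintro rfl
    exact hΓ0 (by simpa using hf hsF)
  have hsp : 0 < s := lt_of_le_of_ne hs.1 (Ne.symm hs0)
  have htp : 0 < t := lt_of_lt_of_le hsp (hs.2.trans ht.1)
  have hs0' : (s : ℂ) ≠ 0 := by exact_mod_cast hs0
  have := hray _ (hf hsF) _ (hf htF) (t / s) (by positivity) (by push_cast; field_simp)
  have hts : t = s := by exact_mod_cast mul_right_cancel₀ hz0 this
  have hrt : r = t := le_antisymm ht.1 (by rw [hts]; exact hs.2)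
  rw [hrt] at hc
  exact hc (hQ.isClosed.frontier_subset htF)

lemma frontier_abstract {Q Γ : Set ℂ} (hQ : IsCompact Q) (hΓ0 : (0 : ℂ) ∉ Γ) (hΓ : Γ ⊆ Q)
    (hf : frontier Q ⊆ Γ) (hray : ∀ x ∈ Γ, ∀ y ∈ Γ, ∀ r : ℝ, 0 < r → y = r * x → y = x) :
    frontier Q = Γ := by
  refine Set.Subset.antisymm hf fun z hz => ?_
  obtain ⟨M, hM⟩ := hQ.isBounded.exists_norm_le
  have hz0 : z ≠ 0 := by rintro rfl; exact hΓ0 hz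
  have hzp : 0 < ‖z‖ := norm_pos_iff.2 hz0
  have hM0 : 0 ≤ M := (norm_nonneg _).trans (hM z (hΓ hz))
  obtain ⟨t, ht, htF⟩ := frontier_of_path hQ.isClosed z 1 (1 + (M + 1) / ‖z‖)
    ⟨1, ⟨le_rfl, by have : 0 ≤ (M + 1) / ‖z‖ := by positivity
                    linarith⟩, by simpa using hΓ hz⟩
    ⟨1 + (M + 1) / ‖z‖, ⟨by have : 0 ≤ (M + 1) / ‖z‖ := by positivity
                            linarith, le_rfl⟩, fun h => by
      have := hM _ h
      rw [norm_mul, Complex.norm_real, Real.norm_eq_abs, abs_of_nonneg (by positivity), add_mul,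
        div_mul_cancel₀ _ hzp.ne'] at this
      linarith⟩
  have := hray _ hz _ (hf htF) t (by linarith [ht.1]) rfl
  rwa [this] at htF

def QQ (n : ℕ) : Set ℂ := (fun w : ℂ => (w / n) ^ n) '' TT n

def RR (n : ℕ) : Set ℂ :=
  {z : ℂ | ∃ U ∈ Matrix.specialUnitaryGroup (Fin n) ℂ, (∏ j, U j j) = z}

lemma TT_compact (n : ℕ) : IsCompact (TT n) := by
  have h1 : IsCompact (Set.pi Set.univ (fun _ : Fin n => Metric.sphere (0 : ℂ) 1)) :=
    isCompact_univ_pi fun _ => isCompact_sphere _ _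
  have h2 : IsClosed {u : Fin n → ℂ | ∏ k, u k = 1} :=
    isClosed_eq (by fun_prop) continuous_const
  have h3 := (h1.inter_right h2).image (f := fun u : Fin n → ℂ => ∑ k, u k) (by fun_prop)
  convert h3 using 1
  ext w
  simp [TT, and_assoc]

lemma QQ_compact (n : ℕ) : IsCompact (QQ n) :=
  (TT_compact n).image (by fun_prop)

lemma frontier_QQ (n : ℕ) (hn : 1 ≤ n) : frontier (QQ n) ⊆ gam n '' Set.Icc (-π) π := by
  intro z hz
  have hn0 : (n : ℂ) ≠ 0 := by norm_cast; omega
  have : NeZero n := ⟨by omega⟩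
  rw [(QQ_compact n).isClosed.frontier_eq] at hz
  obtain ⟨⟨w, hw, rfl⟩, hzi⟩ := hz
  have hopen : IsOpenMap (fun w : ℂ => (w / n) ^ n) := by
    have h1 : IsOpenMap (fun w : ℂ => w / n) := by
      have := (Homeomorph.mulRight₀ ((n : ℂ)⁻¹) (inv_ne_zero hn0)).isOpenMap
      simpa [div_eq_mul_inv] using this
    exact (isOpenQuotientMap_pow n).isOpenMap.comp h1
  have hwi : w ∉ interior (TT n) := by
    intro h
    apply hzi
    refine mem_interior.2 ⟨_, Set.image_mono interior_subset, hopen _ isOpen_interior, ?_⟩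
    exact ⟨w, h, rfl⟩
  obtain ⟨u, hu, hp, rfl⟩ := hw
  obtain ⟨i, a, ha⟩ := not_interior_form hn u hu hp hwi
  -- may choose a to have norm one
  have key : ∃ a b : ℂ, ‖a‖ = 1 ∧ a ^ (n - 1) * b = 1 ∧ ∑ m, u m = (n - 1 : ℕ) * a + b := by
    by_cases h1 : n = 1
    · subst h1
      refine ⟨1, u i, by simp, ?_, ?_⟩
      · simpa [Subsingleton.elim i 0] using hp
      · simp [Subsingleton.elim i 0]
    · have hne : ∃ k, k ≠ i := by
        have : Nontrivial (Fin n) := Fin.nontrivial_iff_two_le.2 (by omega)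
        exact exists_ne i
      obtain ⟨k, hk⟩ := hne
      refine ⟨a, u i, by rw [← ha k hk]; exact hu k, ?_, ?_⟩
      · rw [← hp, ← Finset.prod_erase_mul _ _ (Finset.mem_univ i),
          Finset.prod_congr rfl (fun m hm => ha m (Finset.ne_of_mem_erase hm))]
        simp
      · rw [← Finset.sum_erase_add _ _ (Finset.mem_univ i),
          Finset.sum_congr rfl (fun m hm => ha m (Finset.ne_of_mem_erase hm))]
        simp
  obtain ⟨a, b, han, hab, hs⟩ := key
  have ha0 := ne_zero_of_norm_one han
  refine ⟨Complex.arg (a ^ n), ⟨(Complex.neg_pi_lt_arg _).le, Complex.arg_le_pi _⟩, ?_⟩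
  have e1 : cexp (I * Complex.arg (a ^ n)) = a ^ n := by
    have := Complex.norm_mul_exp_arg_mul_I (a ^ n)
    rw [norm_pow, han] at this
    rw [mul_comm I]
    simpa using this
  simp only [gam]
  rw [Complex.exp_neg, e1, hs, ← mul_pow]
  congr 1
  have hpow : a ^ n = a ^ (n - 1) * a := by rw [← pow_succ]; congr 1; omega
  have hb : b = a * (a ^ n)⁻¹ := by
    have : a ^ (n - 1) ≠ 0 := pow_ne_zero _ ha0
    rw [hpow]; field_simp; linear_combination hab
  rw [hb]
  rw [Nat.cast_sub hn]
  field_simp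
  push_cast
  ring

lemma gam_sub_QQ (n : ℕ) (hn : 1 ≤ n) : gam n '' Set.Icc (-π) π ⊆ QQ n := by
  rintro _ ⟨α, -, rfl⟩
  have hn0 : (n : ℂ) ≠ 0 := by norm_cast; omega
  let a := cexp (I * (α / n : ℝ))
  have hexp : ∀ A : ℝ, ‖cexp (I * A)‖ = 1 := fun A => by
    rw [mul_comm]; exact Complex.norm_exp_ofReal_mul_I _
  have han : ‖a‖ = 1 := hexp _
  have ha0 := ne_zero_of_norm_one han
  have hpow : a ^ n = cexp (I * α) := by
    rw [← Complex.exp_nat_mul]; congr 1; push_cast; field_simp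
  have hinv : ‖cexp (-(I * α))‖ = 1 := by simpa using hexp (-α)
  have hmul : cexp (I * α) * cexp (-(I * α)) = 1 := by rw [← Complex.exp_add]; simp
  refine ⟨_, ⟨Function.update (fun _ => a) ⟨0, hn⟩ (a * cexp (-(I * α))), ?_, ?_, rfl⟩, ?_⟩
  · exact norm_upd _ _ _ (fun _ => han) (by rw [norm_mul, han, hinv, one_mul])
  · rw [prod_upd _ _ _ ha0]
    simp only [Finset.prod_const, Finset.card_univ, Fintype.card_fin, hpow]
    field_simp
    exact hmul
  · simp only [sum_upd, gam]
    rw [← hpow, ← mul_pow]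
    congr 1
    simp
    field_simp
    ring

lemma zero_mem_QQ (n : ℕ) (hn : 2 ≤ n) : (0 : ℂ) ∈ QQ n := by
  have hζ := Complex.isPrimitiveRoot_exp n (by omega)
  set ζ := cexp (2 * π * I / n)
  have hζn : ‖ζ‖ = 1 := hζ.norm'_eq_one (by omega)
  obtain ⟨c, hc⟩ := IsAlgClosed.exists_pow_nat_eq ((∏ k : Fin n, ζ ^ (k : ℕ))⁻¹) (n := n) (by omega)
  have hpn : ‖∏ k : Fin n, ζ ^ (k : ℕ)‖ = 1 := by simp [norm_prod, hζn]
  have hcn : ‖c‖ = 1 := by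
    have := congrArg norm hc
    rw [norm_pow, norm_inv, hpn, inv_one] at this
    exact (pow_eq_one_iff_of_nonneg (norm_nonneg _) (by omega)).1 this
  refine ⟨0, ⟨fun k => c * ζ ^ (k : ℕ), ?_, ?_, ?_⟩, ?_⟩
  · intro k; simp [hcn, hζn]
  · rw [Finset.prod_mul_distrib]
    simp only [Finset.prod_const, Finset.card_univ, Fintype.card_fin]
    rw [hc, inv_mul_cancel₀ (ne_zero_of_norm_one hpn)]
  · rw [← Finset.mul_sum, Fin.sum_univ_eq_sum_range (fun k => ζ ^ k), hζ.geom_sum_eq_zero (by omega),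
      mul_zero]
  · simp; omega

open scoped Matrix.Norms.L2Operator in
lemma trace_mem_TT (n : ℕ) (U : Matrix (Fin n) (Fin n) ℂ)
    (hU : U ∈ Matrix.specialUnitaryGroup (Fin n) ℂ) : U.trace ∈ TT n := by
  obtain ⟨h1, h2⟩ := Matrix.mem_specialUnitaryGroup_iff.1 hU
  have hcard : U.charpoly.roots.toList.length = n := by
    rw [Multiset.length_toList]
    have := (IsAlgClosed.splits U.charpoly).natDegree_eq_card_roots
    rw [← this, Matrix.charpoly_natDegree_eq_dim, Fintype.card_fin]
  have hnorm : ∀ μ ∈ U.charpoly.roots, ‖μ‖ = 1 := by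
    intro μ hμ
    have hs : μ ∈ spectrum ℂ U := by
      rw [Matrix.mem_spectrum_iff_isRoot_charpoly]
      exact (Polynomial.mem_roots'.1 hμ).2
    have := spectrum.subset_circle_of_unitary h1 hs
    simpa using this
  refine ⟨fun k => U.charpoly.roots.toList.get (k.cast hcard.symm), ?_, ?_, ?_⟩
  · intro k
    exact hnorm _ (Multiset.mem_toList.1 (List.get_mem _ _))
  · rw [← h2, Matrix.det_eq_prod_roots_charpoly]
    conv_rhs => rw [← Multiset.coe_toList U.charpoly.roots, Multiset.prod_coe]
    rw [← Fin.prod_univ_getElem]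
    exact Fintype.prod_equiv (finCongr hcard.symm) _ _ (fun k => rfl)
  · rw [Matrix.trace_eq_sum_roots_charpoly]
    conv_rhs => rw [← Multiset.coe_toList U.charpoly.roots, Multiset.sum_coe]
    rw [← Fin.sum_univ_getElem]
    exact Fintype.sum_equiv (finCongr hcard.symm) _ _ (fun k => rfl)

lemma fourierMat_exists (n : ℕ) (hn : 1 ≤ n) : ∃ F : Matrix (Fin n) (Fin n) ℂ,
    F * Fᴴ = 1 ∧ ∀ j k, F j k * star (F j k) = 1 / n := by
  have hζ := Complex.isPrimitiveRoot_exp n (by omega)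
  set ζ := cexp (2 * π * I / n)
  have hn0 : (n : ℂ) ≠ 0 := by norm_cast; omega
  have hζn : ‖ζ‖ = 1 := hζ.norm'_eq_one (by omega)
  have hζ0 := ne_zero_of_norm_one hζn
  have hstar : star ζ = ζ⁻¹ := by
    rw [Complex.inv_def, Complex.normSq_eq_norm_sq, hζn]; simp
  have hsq : (((Real.sqrt n : ℝ) : ℂ)⁻¹) * ((Real.sqrt n : ℝ) : ℂ)⁻¹ = 1 / n := by
    rw [← mul_inv, ← Complex.ofReal_mul, Real.mul_self_sqrt (by positivity)]; simp
  have hs : ∀ j k l : Fin n, (((Real.sqrt n : ℝ) : ℂ)⁻¹ * ζ ^ ((j : ℕ) * k)) *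
      star (((Real.sqrt n : ℝ) : ℂ)⁻¹ * ζ ^ ((l : ℕ) * k)) =
      1 / n * (ζ ^ (j : ℕ) * (ζ ^ (l : ℕ))⁻¹) ^ (k : ℕ) := by
    intro j k l
    rw [star_mul', star_pow, hstar, mul_mul_mul_comm, ← hsq]
    have : star (((Real.sqrt n : ℝ) : ℂ)⁻¹) = ((Real.sqrt n : ℝ) : ℂ)⁻¹ := by
      rw [star_inv₀]; congr 1; exact Complex.conj_ofReal _
    rw [this, mul_pow, inv_pow, inv_pow, pow_mul, pow_mul]
  refine ⟨Matrix.of fun j k => ((Real.sqrt n : ℝ) : ℂ)⁻¹ * ζ ^ ((j : ℕ) * k), ?_, ?_⟩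
  · ext j l
    simp only [Matrix.mul_apply, Matrix.conjTranspose_apply, Matrix.of_apply, hs]
    rw [← Finset.mul_sum, Fin.sum_univ_eq_sum_range (fun k => (ζ ^ (j : ℕ) * (ζ ^ (l : ℕ))⁻¹) ^ k)]
    by_cases hjl : j = l
    · subst hjl
      simp [hζ0, hn0]
    · rw [Matrix.one_apply_ne hjl]
      have hx1 : (ζ ^ (j : ℕ) * (ζ ^ (l : ℕ))⁻¹) ≠ 1 := by
        intro h
        apply hjl
        have hl0 : ζ ^ (l : ℕ) ≠ 0 := pow_ne_zero _ hζ0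
        field_simp at h
        exact Fin.ext (hζ.pow_inj j.2 l.2 h)
      have hxn : (ζ ^ (j : ℕ) * (ζ ^ (l : ℕ))⁻¹) ^ n = 1 := by
        rw [mul_pow, inv_pow, pow_right_comm, pow_right_comm ζ (l : ℕ) n, hζ.pow_eq_one]; simp
      rw [geom_sum_eq hx1, hxn]; simp
  · intro j k
    simp only [Matrix.of_apply, hs]
    simp [hζ0]

lemma QQ_sub_RR (n : ℕ) (hn : 1 ≤ n) : QQ n ⊆ RR n := by
  rintro _ ⟨_, ⟨u, hu, hp, rfl⟩, rfl⟩
  obtain ⟨F, hF, hF2⟩ := fourierMat_exists n hn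
  have hF' : Fᴴ * F = 1 := mul_eq_one_comm.1 hF
  have hD : Matrix.diagonal u * (Matrix.diagonal u)ᴴ = 1 := by
    rw [Matrix.diagonal_conjTranspose, Matrix.diagonal_mul_diagonal, ← Matrix.diagonal_one]
    congr 1
    ext k
    have := Complex.mul_conj (u k)
    rw [Complex.normSq_eq_norm_sq, hu] at this
    simpa using this
  refine ⟨F * Matrix.diagonal u * Fᴴ, ?_, ?_⟩
  · rw [Matrix.mem_specialUnitaryGroup_iff, Matrix.mem_unitaryGroup_iff]
    constructor
    · rw [Matrix.star_eq_conjTranspose, Matrix.conjTranspose_mul, Matrix.conjTranspose_mul,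
        Matrix.conjTranspose_conjTranspose]
      calc F * diagonal u * Fᴴ * (F * ((diagonal u)ᴴ * Fᴴ))
          = F * diagonal u * (Fᴴ * F) * ((diagonal u)ᴴ * Fᴴ) := by simp only [Matrix.mul_assoc]
        _ = F * (diagonal u * (diagonal u)ᴴ) * Fᴴ := by rw [hF', Matrix.mul_one]; simp only [Matrix.mul_assoc]
        _ = 1 := by rw [hD, Matrix.mul_one, hF]
    · rw [Matrix.det_mul, Matrix.det_mul, Matrix.det_diagonal, hp, mul_one, ← Matrix.det_mul, hF,
        Matrix.det_one]
  · have : ∀ j, (F * Matrix.diagonal u * Fᴴ) j j = (∑ k, u k) / n := by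
      intro j
      rw [Matrix.mul_apply, Finset.sum_div]
      refine Finset.sum_congr rfl fun k _ => ?_
      rw [Matrix.mul_diagonal, Matrix.conjTranspose_apply]
      linear_combination u k * hF2 j k
    simp [this, div_pow]

lemma RR_sub (n : ℕ) (hn : 1 ≤ n) (z : ℂ) (hz : z ∈ RR n) (hz0 : z ≠ 0) :
    ∃ q ∈ QQ n, ∃ r : ℝ, 0 ≤ r ∧ r ≤ 1 ∧ z = r * q := by
  obtain ⟨U, hU, rfl⟩ := hz
  have hn0 : (n : ℂ) ≠ 0 := by norm_cast; omega
  have hnr : (0 : ℝ) < n := by exact_mod_cast hn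
  have hd : ∀ j, U j j ≠ 0 := fun j => Finset.prod_ne_zero_iff.1 hz0 j (Finset.mem_univ j)
  have hdn : ∀ j, ((‖U j j‖ : ℝ) : ℂ) ≠ 0 := fun j => by exact_mod_cast (norm_ne_zero_iff.2 (hd j))
  let e : Fin n → ℂ := fun j => U j j / (‖U j j‖ : ℝ)
  have he : ∀ j, ‖e j‖ = 1 := by
    intro j
    simp only [e]
    rw [norm_div, Complex.norm_real, norm_norm, div_self (norm_ne_zero_iff.2 (hd j))]
  have he0 : ∀ j, e j ≠ 0 := fun j => ne_zero_of_norm_one (he j)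
  have hUe : ∀ j, U j j = (‖U j j‖ : ℝ) * e j := by
    intro j; simp only [e]; rw [mul_div_cancel₀]; exact hdn j
  obtain ⟨ψ, hψ⟩ := IsAlgClosed.exists_pow_nat_eq (∏ j, e j) (n := n) (by omega)
  have hψn : ‖ψ‖ = 1 := by
    have := congrArg norm hψ
    rw [norm_pow, norm_prod] at this
    simp only [he, Finset.prod_const_one] at this
    exact (pow_eq_one_iff_of_nonneg (norm_nonneg _) (by omega)).1 this
  let V : Matrix (Fin n) (Fin n) ℂ := Matrix.diagonal fun j => ψ / e j
  have hV : V ∈ Matrix.specialUnitaryGroup (Fin n) ℂ := by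
    rw [Matrix.mem_specialUnitaryGroup_iff, Matrix.mem_unitaryGroup_iff]
    constructor
    · rw [Matrix.star_eq_conjTranspose, Matrix.diagonal_conjTranspose, Matrix.diagonal_mul_diagonal,
        ← Matrix.diagonal_one]
      congr 1
      ext k
      have := Complex.mul_conj (ψ / e k)
      rw [Complex.normSq_eq_norm_sq, norm_div, he, hψn] at this
      simpa using this
    · rw [Matrix.det_diagonal, Finset.prod_div_distrib, Finset.prod_const, Finset.card_univ,
        Fintype.card_fin, hψ, div_self]
      exact Finset.prod_ne_zero_iff.2 fun j _ => he0 j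
  have htr : (V * U).trace = ψ * ((∑ j, ‖U j j‖ : ℝ) : ℂ) := by
    rw [Matrix.trace, Complex.ofReal_sum, Finset.mul_sum]
    refine Finset.sum_congr rfl fun j _ => ?_
    simp only [Matrix.diag_apply, V, Matrix.diagonal_mul]
    have := hUe j
    have h2 := he0 j
    rw [div_mul_eq_mul_div, div_eq_iff h2]
    linear_combination ψ * this
  have hT := trace_mem_TT n (V * U) (mul_mem hV hU)
  rw [htr] at hT
  obtain ⟨M, hM⟩ : ∃ M, M = (∑ j, ‖U j j‖) / n := ⟨_, rfl⟩
  have : Nonempty (Fin n) := ⟨⟨0, hn⟩⟩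
  have hM0 : 0 < M := by
    rw [hM]
    exact div_pos (Finset.sum_pos (fun j _ => norm_pos_iff.2 (hd j)) Finset.univ_nonempty) hnr
  have amgm : ∏ j, ‖U j j‖ ≤ M ^ n := by
    have h := Real.geom_mean_le_arith_mean Finset.univ (fun _ : Fin n => (1 : ℝ)) (fun j => ‖U j j‖)
      (fun _ _ => zero_le_one) (by simpa using hnr) (fun _ _ => norm_nonneg _)
    simp only [Real.rpow_one, one_mul, Finset.sum_const, Finset.card_univ, Fintype.card_fin,
      nsmul_eq_mul, mul_one] at h
    rw [← hM] at h
    have h2 := pow_le_pow_left₀ (by positivity) h n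
    rwa [Real.rpow_inv_natCast_pow (Finset.prod_nonneg fun _ _ => norm_nonneg _) (by omega)] at h2
  refine ⟨_, ⟨_, hT, rfl⟩, (∏ j, ‖U j j‖) / M ^ n, ?_, ?_, ?_⟩
  · exact div_nonneg (Finset.prod_nonneg fun _ _ => norm_nonneg _) (by positivity)
  · exact (div_le_one (by positivity)).2 amgm
  · have h1 : ∏ j, U j j = ((∏ j, ‖U j j‖ : ℝ) : ℂ) * ψ ^ n := by
      rw [hψ, Complex.ofReal_prod, ← Finset.prod_mul_distrib]
      exact Finset.prod_congr rfl fun j _ => hUe j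
    have h2 : (ψ * ((∑ j, ‖U j j‖ : ℝ) : ℂ)) / n = ψ * (M : ℂ) := by
      rw [hM]; push_cast; ring
    have hMc : (M : ℂ) ≠ 0 := by exact_mod_cast hM0.ne'
    rw [h1]
    simp only
    rw [h2, mul_pow]
    push_cast
    field_simp

lemma main3 (n : ℕ) (hn : 3 ≤ n) : IsCompact (RR n) ∧ frontier (RR n) = gam n '' Set.Icc (-π) π := by
  have hΓ0 : (0 : ℂ) ∉ gam n '' Set.Icc (-π) π := by
    rintro ⟨α, -, h⟩
    exact gam_ne_zero n hn α h
  have hray : ∀ x ∈ gam n '' Set.Icc (-π) π, ∀ y ∈ gam n '' Set.Icc (-π) π, ∀ r : ℝ, 0 < r →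
      y = r * x → y = x := fun x hx y hy r hr h => gam_ray n hn x y hx hy r hr h
  have hRQ : RR n = QQ n := by
    refine Set.Subset.antisymm (fun z hz => ?_) (QQ_sub_RR n (by omega))
    by_cases h0 : z = 0
    · rw [h0]; exact zero_mem_QQ n (by omega)
    · obtain ⟨q, hq, r, r0, r1, rfl⟩ := RR_sub n (by omega) z hz h0
      exact star_abstract (QQ_compact n) (zero_mem_QQ n (by omega)) hΓ0 (frontier_QQ n (by omega))
        hray q hq r r0 r1
  rw [hRQ]
  exact ⟨QQ_compact n, frontier_abstract (QQ_compact n) hΓ0 (gam_sub_QQ n (by omega))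
    (frontier_QQ n (by omega)) hray⟩

lemma gam_compact (n : ℕ) : IsCompact (gam n '' Set.Icc (-π) π) :=
  isCompact_Icc.image (by unfold gam; fun_prop)

lemma small (n : ℕ) (h : RR n = gam n '' Set.Icc (-π) π) (him : ∀ z ∈ RR n, z.im = 0) :
    IsCompact (RR n) ∧ frontier (RR n) = gam n '' Set.Icc (-π) π := by
  have hc : IsCompact (RR n) := by rw [h]; exact gam_compact n
  refine ⟨hc, ?_⟩
  rw [hc.isClosed.frontier_eq, ← h]
  have : interior (RR n) = ∅ := by
    have h1 : interior (RR n) ⊆ interior {z : ℂ | z.im ≤ 0} :=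
      interior_mono fun z hz => (him z hz).le
    rw [Complex.interior_setOf_im_le] at h1
    refine Set.eq_empty_of_forall_notMem fun z hz => ?_
    have := h1 hz
    have h2 := him z (interior_subset hz)
    simp only [Set.mem_setOf_eq] at this
    linarith
  rw [this, Set.diff_empty]

lemma main1 : IsCompact (RR 1) ∧ frontier (RR 1) = gam 1 '' Set.Icc (-π) π := by
  have h1 : ∀ z ∈ RR 1, z = 1 := by
    rintro z ⟨U, hU, rfl⟩
    have := (Matrix.mem_specialUnitaryGroup_iff.1 hU).2
    simpa using this
  refine small 1 (Set.Subset.antisymm ?_ ((gam_sub_QQ 1 le_rfl).trans (QQ_sub_RR 1 le_rfl))) ?_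
  · intro z hz
    rw [h1 z hz]
    exact ⟨0, ⟨by linarith [Real.pi_pos], Real.pi_pos.le⟩, by simp [gam]⟩
  · intro z hz
    rw [h1 z hz]; simp

lemma main2 : IsCompact (RR 2) ∧ frontier (RR 2) = gam 2 '' Set.Icc (-π) π := by
  have h1 : ∀ z ∈ RR 2, ∃ r : ℝ, 0 ≤ r ∧ r ≤ 1 ∧ z = r := by
    rintro z ⟨U, hU, rfl⟩
    obtain ⟨hu, hdet⟩ := Matrix.mem_specialUnitaryGroup_iff.1 hU
    have hu1 := Matrix.mem_unitaryGroup_iff.1 hu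
    have hinv : star U = U.adjugate := by
      have h2 : U * U.adjugate = 1 := by rw [Matrix.mul_adjugate, hdet, one_smul]
      have h3 : star U * U = 1 := Matrix.mem_unitaryGroup_iff'.1 hu
      calc star U = star U * (U * U.adjugate) := by rw [h2, mul_one]
        _ = U.adjugate := by rw [← mul_assoc, h3, one_mul]
    have h4 : star (U 0 0) = U 1 1 := by
      have := congrFun (congrFun hinv 0) 0
      simpa [Matrix.adjugate_fin_two, Matrix.star_apply] using this
    have h5 : U 0 0 * star (U 0 0) + U 0 1 * star (U 0 1) = 1 := by
      have := congrFun (congrFun hu1 0) 0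
      simpa [Matrix.mul_apply, Fin.sum_univ_two, Matrix.star_apply] using this
    have e1 : U 0 0 * star (U 0 0) = (Complex.normSq (U 0 0) : ℂ) := Complex.mul_conj _
    have e2 : U 0 1 * star (U 0 1) = (Complex.normSq (U 0 1) : ℂ) := Complex.mul_conj _
    refine ⟨Complex.normSq (U 0 0), Complex.normSq_nonneg _, ?_, ?_⟩
    · rw [e1, e2] at h5
      have : Complex.normSq (U 0 0) + Complex.normSq (U 0 1) = 1 := by exact_mod_cast h5
      linarith [Complex.normSq_nonneg (U 0 1)]
    · rw [Fin.prod_univ_two, ← h4, e1]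
  refine small 2 (Set.Subset.antisymm ?_
    ((gam_sub_QQ 2 (by norm_num)).trans (QQ_sub_RR 2 (by norm_num)))) ?_
  · intro z hz
    obtain ⟨r, r0, r1, rfl⟩ := h1 z hz
    have hα : Real.cos (Real.arccos (2 * r - 1)) = 2 * r - 1 :=
      Real.cos_arccos (by linarith) (by linarith)
    refine ⟨Real.arccos (2 * r - 1), ⟨by linarith [Real.pi_pos, Real.arccos_nonneg (2 * r - 1)],
      Real.arccos_le_pi _⟩, ?_⟩
    set α := Real.arccos (2 * r - 1)
    have hmul : cexp (I * α) * cexp (-(I * α)) = 1 := by rw [← Complex.exp_add]; simp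
    have hsum : cexp (I * α) + cexp (-(I * α)) = 2 * (2 * r - 1) := by
      have : ((Real.cos α : ℝ) : ℂ) = 2 * r - 1 := by rw [hα]; push_cast; ring
      rw [← this, Complex.ofReal_cos, Complex.cos]
      rw [mul_comm I, neg_mul]; ring
    simp only [gam]
    push_cast
    linear_combination (1 / 4) * hsum + (1 / 2 + 1 / 4 * cexp (-(I * α))) * hmul
  · intro z hz
    obtain ⟨r, -, -, rfl⟩ := h1 z hz
    simp

/-- The image `Πd(SU(n))` is a compact subset of `ℂ` whose topological frontier equals
the image of the curve `γ(α) = e^{iα}(1 − (1 − e^{−iα})/n)ⁿ`, `α ∈ [−π, π]`. -/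
theorem diagonalProduct_specialUnitaryGroup_isCompact_frontier (n : ℕ) (hn : 1 ≤ n) :
    IsCompact {z : ℂ | ∃ U ∈ Matrix.specialUnitaryGroup (Fin n) ℂ, (∏ j, U j j) = z} ∧
    frontier {z : ℂ | ∃ U ∈ Matrix.specialUnitaryGroup (Fin n) ℂ, (∏ j, U j j) = z} =
      (fun α : ℝ => Complex.exp (Complex.I * α) *
        (1 - (1 - Complex.exp (-(Complex.I * α))) / n) ^ n) '' Set.Icc (-π) π := by
  have key : IsCompact (RR n) ∧ frontier (RR n) = gam n '' Set.Icc (-π) π := by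
    by_cases h3 : 3 ≤ n
    · exact main3 n h3
    · have : n = 1 ∨ n = 2 := by omega
      rcases this with rfl | rfl
      · exact main1
      · exact main2
  exact key
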